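/- arXiv:2511.01507 — 8 statements merged into one kernel-verified Lean document; each statement's English description precedes it below -/
import Mathlib

section
/- Let q ≥ 3 and k ≥ 1 be integers and a, b > 0 real. For every t > 0, the operator W maps the vector of I₁ with parameter t to the vector of I₁ with parameter t' = ((t(b+q−2)+1)/((q−1)t+b))^k; in particular the set I₁ is invariant under W. -/
open Finset

/-- Spin-dependent power of `a`: `a^i` with `i = 1` encoded as `true`
and `i = -1` encoded as `false`. -/
noncomputable def spinPow (a : ℝ) : Bool → ℝ
  | true => a
  | false => a⁻¹

/-- The operator `W` of the (2,q)-Ising-Potts model on vectors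
`z ∈ ℝ^{2q-1}`, modelled as functions `Bool → ℕ → ℝ` (first argument: the
Ising spin `i ∈ {1,-1}` encoded as `true/false`, second argument: the Potts
spin `j ∈ {1,…,q}`), with the convention `z_{-1,q} = 1`.  Here `a = θ_I^α`,
`b = θ_P^{1-α}`, and `k` is the order of the Cayley tree. -/
noncomputable def Wop (q k : ℕ) (a b : ℝ) (z : Bool → ℕ → ℝ) : Bool → ℕ → ℝ :=
  fun i j =>
    if i = false ∧ j = q then 1
    else
      ((∑ v ∈ Icc 1 q, (spinPow a i * z true v + spinPow a (!i) * z false v) +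
          (b - 1) * (spinPow a i * z true j + spinPow a (!i) * z false j)) /
        (∑ v ∈ Icc 1 (q - 1), (a⁻¹ * z true v + a * z false v) +
          b * (a⁻¹ * z true q + a))) ^ k

/-- The vector of the invariant set `I₁` with parameter `t`:
`z_{1,1} = ⋯ = z_{1,q-1} = z_{-1,1} = ⋯ = z_{-1,q-1} = t` and
`z_{1,q} = 1` (together with the convention `z_{-1,q} = 1`). -/
noncomputable def iOneVec (q : ℕ) (t : ℝ) : Bool → ℕ → ℝ :=
  fun _ j => if j = q then 1 else t

/-- for `q ≥ 3`, `k ≥ 1`, `a, b > 0` and every `t > 0`, the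
operator `W` maps the `I₁`-vector with parameter `t` to the `I₁`-vector with
parameter `t' = ((t(b+q-2)+1)/((q-1)t+b))^k`; in particular `I₁` is
invariant under `W`. -/
theorem stmt1 (q k : ℕ) (hq : 3 ≤ q) (hk : 1 ≤ k)
    (a b : ℝ) (ha : 0 < a) (hb : 0 < b) :
    ∀ t : ℝ, 0 < t →
      Wop q k a b (iOneVec q t) =
        iOneVec q (((t * (b + (q : ℝ) - 2) + 1) / (((q : ℝ) - 1) * t + b)) ^ k) := by
  intro t ht
  obtain ⟨n, rfl⟩ : ∃ n, q = n + 1 := ⟨q - 1, by omega⟩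
  have hs : 0 < a + a⁻¹ := by positivity
  have hD : 0 < (n : ℝ) * t + b := by positivity
  have hsum : ∀ c d : ℝ, ∑ v ∈ Icc 1 n,
      (c * (if v = n + 1 then 1 else t) + d * (if v = n + 1 then 1 else t))
        = n * ((c + d) * t) := by
    intro c d
    have h : ∀ v ∈ Icc 1 n,
        (c * (if v = n + 1 then 1 else t) + d * (if v = n + 1 then 1 else t))
          = (c + d) * t := by
      intro v hv
      have hv' := (Finset.mem_Icc.mp hv).2
      rw [if_neg (by omega)]
      ring
    rw [Finset.sum_congr rfl h]
    simp
  have hsp : ∀ i, spinPow a i + spinPow a (!i) = a + a⁻¹ := by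
    intro i
    cases i <;> simp [spinPow, add_comm]
  funext i j
  by_cases hij : i = false ∧ j = n + 1
  · simp [Wop, iOneVec, hij]
  · have hden : (n : ℝ) * ((a⁻¹ + a) * t) + b * (a⁻¹ * 1 + a)
        = (a + a⁻¹) * (n * t + b) := by ring
    simp only [Wop, iOneVec, if_neg hij, Nat.add_sub_cancel]
    rw [Finset.sum_Icc_succ_top (by omega), hsum, hsum, hsp]
    simp only [if_true]
    rw [hden]
    have hsi := hsp i
    by_cases hj : j = n + 1
    · simp only [hj, if_true]
      have hnum : (n : ℝ) * ((a + a⁻¹) * t) + (spinPow a i * 1 + spinPow a (!i) * 1)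
          + (b - 1) * (spinPow a i * 1 + spinPow a (!i) * 1)
          = (a + a⁻¹) * (n * t + b) := by
        rw [← hsi]; ring
      rw [hnum, div_self (by positivity), one_pow]
    · simp only [if_neg hj]
      have hnum : (n : ℝ) * ((a + a⁻¹) * t) + (spinPow a i * 1 + spinPow a (!i) * 1)
          + (b - 1) * (spinPow a i * t + spinPow a (!i) * t)
          = (a + a⁻¹) * (t * (b + ((n + 1 : ℕ) : ℝ) - 2) + 1) := by
        rw [← hsi]; push_cast; ring
      rw [hnum, mul_div_mul_left _ _ hs.ne']
      push_cast
      rw [add_sub_cancel_right]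
end

section
/- Let q ≥ 3 and k ≥ 2 be integers and let b > 0 be real. Set b_c = (√((q−2)²(k−1)² + 4(q−1)(k+1)²) − (q−2)(k−1))/(2(k−1)). If b ≤ b_c, then the equation z = ((z(b+q−2)+1)/((q−1)z+b))^k has exactly one positive solution (namely z = 1). -/
theorem aux_mono (A D b κ : ℝ) (hA : 0 < A) (hD : 0 < D) (hb : 0 < b) (hκ : 1 < κ)
    (h : (κ - 1) ^ 2 * (A * b) ≤ (κ + 1) ^ 2 * D) :
    StrictMonoOn (fun z : ℝ => Real.log z - κ * (Real.log (A * z + 1) - Real.log (D * z + b)))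
      (Set.Ioi 0) := by
  set u := Real.sqrt (A * D) with hu
  set w := Real.sqrt b with hw
  have hu0 : 0 < u := Real.sqrt_pos.2 (by positivity)
  have hw0 : 0 < w := Real.sqrt_pos.2 hb
  have hu2 : u ^ 2 = A * D := Real.sq_sqrt (by positivity)
  have hw2 : w ^ 2 = b := Real.sq_sqrt hb.le
  have hr : (u * w) ^ 2 = A * b * D := by rw [mul_pow, hu2, hw2]; ring
  have h1 : (κ - 1) * (u * w) ≤ (κ + 1) * D := by
    refine abs_le_of_sq_le_sq' ?_ (by positivity) |>.2
    have : ((κ - 1) * (u * w)) ^ 2 = ((κ - 1) ^ 2 * (A * b)) * D := by rw [mul_pow, hr]; ring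
    rw [this]
    calc _ ≤ ((κ + 1) ^ 2 * D) * D := by gcongr
      _ = _ := by ring
  have h2 : 0 ≤ (κ + 1) * D - (κ - 1) * (A * b) + 2 * (u * w) := by
    have h3 : D * ((κ + 1) * D - (κ - 1) * (A * b) + 2 * (u * w))
        = ((κ + 1) * D - (κ - 1) * (u * w)) * (D + u * w) := by
      linear_combination (κ - 1) * hr
    have h4 : 0 ≤ D * ((κ + 1) * D - (κ - 1) * (A * b) + 2 * (u * w)) := by
      rw [h3]; exact mul_nonneg (by linarith) (by positivity)
    exact nonneg_of_mul_nonneg_right h4 hD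
  have hder : ∀ z : ℝ, 0 < z → HasDerivAt
      (fun z : ℝ => Real.log z - κ * (Real.log (A * z + 1) - Real.log (D * z + b)))
      (((u * z - w) ^ 2 + ((κ + 1) * D - (κ - 1) * (A * b) + 2 * (u * w)) * z) /
        (z * (A * z + 1) * (D * z + b))) z := by
    intro z hz
    have a1 : 0 < A * z + 1 := by positivity
    have a2 : 0 < D * z + b := by positivity
    have d1 : HasDerivAt (fun z : ℝ => A * z + 1) A z := by
      simpa using ((hasDerivAt_id z).const_mul A).add_const 1
    have d2 : HasDerivAt (fun z : ℝ => D * z + b) D z := by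
      simpa using ((hasDerivAt_id z).const_mul D).add_const b
    have d := (Real.hasDerivAt_log hz.ne').sub
      (((d1.log a1.ne').sub (d2.log a2.ne')).const_mul κ)
    refine d.congr_deriv ?_
    have e : (u * z - w) ^ 2 + ((κ + 1) * D - (κ - 1) * (A * b) + 2 * (u * w)) * z
        = A * D * z ^ 2 + b + ((κ + 1) * D - (κ - 1) * (A * b)) * z := by
      linear_combination z ^ 2 * hu2 + hw2
    rw [e]
    field_simp
    ring
  have hpos : ∀ z : ℝ, 0 < z → z ≠ w / u → 0 < deriv
      (fun z : ℝ => Real.log z - κ * (Real.log (A * z + 1) - Real.log (D * z + b))) z := by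
    intro z hz hne
    rw [(hder z hz).deriv]
    have : u * z - w ≠ 0 := by
      intro h0
      apply hne
      rw [eq_div_iff hu0.ne']
      linarith
    have : 0 < (u * z - w) ^ 2 := by positivity
    have : 0 ≤ ((κ + 1) * D - (κ - 1) * (A * b) + 2 * (u * w)) * z := mul_nonneg h2 hz.le
    apply div_pos
    · linarith
    · positivity
  have hc : 0 < w / u := by positivity
  have hun : Set.Ioc 0 (w / u) ∪ Set.Ici (w / u) = Set.Ioi 0 := Set.Ioc_union_Ici_eq_Ioi hc
  rw [← hun]
  refine StrictMonoOn.union (c := w / u) ?_ ?_ (isGreatest_Ioc hc) isLeast_Ici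
  · refine strictMonoOn_of_deriv_pos (convex_Ioc _ _)
      (fun z hz => (hder z hz.1).continuousAt.continuousWithinAt) ?_
    intro z hz
    rw [interior_Ioc] at hz
    exact hpos z hz.1 hz.2.ne
  · refine strictMonoOn_of_deriv_pos (convex_Ici _)
      (fun z hz => (hder z (hc.trans_le hz)).continuousAt.continuousWithinAt) ?_
    intro z hz
    rw [interior_Ici] at hz
    exact hpos z (hc.trans hz) (ne_of_gt hz)

/-- for `q ≥ 3`, `k ≥ 2` and `0 < b ≤ b_c`, where
`b_c = (√((q-2)²(k-1)² + 4(q-1)(k+1)²) − (q-2)(k-1))/(2(k-1))`, the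
translation-invariant fixed-point equation of the (2,q)-Ising-Potts model on
the invariant set `I₁` has exactly one positive solution, namely `z = 1`
(absence of a phase transition coming from `I₁`). -/
theorem stmt4 (q k : ℕ) (hq : 3 ≤ q) (hk : 2 ≤ k) (b : ℝ) (hb : 0 < b)
    (hbc : b ≤ (Real.sqrt (((q : ℝ) - 2) ^ 2 * ((k : ℝ) - 1) ^ 2 +
        4 * ((q : ℝ) - 1) * ((k : ℝ) + 1) ^ 2) - ((q : ℝ) - 2) * ((k : ℝ) - 1)) /
        (2 * ((k : ℝ) - 1))) :
    ∀ z : ℝ, 0 < z →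
      (z = ((z * (b + (q : ℝ) - 2) + 1) / (((q : ℝ) - 1) * z + b)) ^ k ↔ z = 1) := by
  intro z hz
  have hq' : (3 : ℝ) ≤ q := by exact_mod_cast hq
  have hk' : (2 : ℝ) ≤ k := by exact_mod_cast hk
  have hA : 0 < b + (q : ℝ) - 2 := by linarith
  have hD : 0 < (q : ℝ) - 1 := by linarith
  constructor
  · intro heq
    have hquad : ((k : ℝ) - 1) ^ 2 * ((b + (q : ℝ) - 2) * b) ≤ ((k : ℝ) + 1) ^ 2 * ((q : ℝ) - 1) := by
      rw [le_div_iff₀ (by linarith)] at hbc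
      have h1 : b * (2 * ((k : ℝ) - 1)) + ((q : ℝ) - 2) * ((k : ℝ) - 1) ≤ Real.sqrt
          (((q : ℝ) - 2) ^ 2 * ((k : ℝ) - 1) ^ 2 + 4 * ((q : ℝ) - 1) * ((k : ℝ) + 1) ^ 2) := by
        linarith
      have h0 : 0 ≤ b * (2 * ((k : ℝ) - 1)) + ((q : ℝ) - 2) * ((k : ℝ) - 1) := by
        have : 0 < (k : ℝ) - 1 := by linarith
        have : 0 < (q : ℝ) - 2 := by linarith
        positivity
      have h2 := (Real.le_sqrt' (lt_of_le_of_ne h0 (by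
        have : 0 < (k : ℝ) - 1 := by linarith
        have : 0 < (q : ℝ) - 2 := by linarith
        positivity))).1 h1
      linarith
    have hm := aux_mono (b + (q : ℝ) - 2) ((q : ℝ) - 1) b k hA hD hb (by linarith) hquad
    apply hm.injOn (Set.mem_Ioi.2 hz) (Set.mem_Ioi.2 one_pos)
    have a1 : 0 < (b + (q : ℝ) - 2) * z + 1 := by positivity
    have a2 : 0 < ((q : ℝ) - 1) * z + b := by positivity
    have hl : Real.log z = k * (Real.log ((b + (q : ℝ) - 2) * z + 1)
        - Real.log (((q : ℝ) - 1) * z + b)) := by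
      rw [← Real.log_div a1.ne' a2.ne', ← Real.log_pow]
      congr 1
      rw [mul_comm (b + (q : ℝ) - 2) z]
      exact heq
    have e : (b + (q : ℝ) - 2) * 1 + 1 = ((q : ℝ) - 1) * 1 + b := by ring
    simp only [e, Real.log_one]
    linarith
  · rintro rfl
    have e : 1 * (b + (q : ℝ) - 2) + 1 = ((q : ℝ) - 1) * 1 + b := by ring
    have : ((q : ℝ) - 1) * 1 + b ≠ 0 := ne_of_gt (by linarith)
    rw [e, div_self this, one_pow]
end

section
/- Let q ≥ 3 and k ≥ 2 be integers and let b > b_c, where b_c = (√((q−2)²(k−1)² + 4(q−1)(k+1)²) − (q−2)(k−1))/(2(k−1)). Set A = (q−1)^k/(b+q−2)^{k+1} and B = b(b+q−2)/(q−1). Then: (i) the quadratic equation x² + (2 − (B−1)(k−1))x + B = 0 has two distinct positive real roots x₁ < x₂; (ii) setting ηᵢ = (1/xᵢ)((1+xᵢ)/(B+xᵢ))^k for i = 1,2, one has η₁ ≠ η₂, and if A lies strictly between η₁ and η₂ then the equation A·x = ((1+x)/(B+x))^k has exactly three distinct positive solutions, while if A = η₁ or A = η₂ then it has exactly two distinct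 positive solutions. -/
open Set in
theorem aux_count (f : ℝ → ℝ) (A x₁ x₂ : ℝ) (h1 : 0 < x₁) (h12 : x₁ < x₂)
    (hc : ContinuousOn f (Ioi 0)) (ha : StrictAntiOn f (Ioc 0 x₁))
    (hm : StrictMonoOn f (Icc x₁ x₂)) (ha2 : StrictAntiOn f (Ici x₂))
    (hs : ∃ y, 0 < y ∧ y < x₁ ∧ A < f y) (hl : ∃ y, x₂ < y ∧ f y < A) :
    (f x₁ < A ∧ A < f x₂ → {x : ℝ | 0 < x ∧ f x = A}.ncard = 3) ∧
    ((A = f x₁ ∨ A = f x₂) → {x : ℝ | 0 < x ∧ f x = A}.ncard = 2) := by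
  obtain ⟨y, hy0, hy1, hyA⟩ := hs
  obtain ⟨z, hz2, hzA⟩ := hl
  have hlow : f x₁ < A → ∃ u, 0 < u ∧ u < x₁ ∧ f u = A := by
    intro h
    obtain ⟨u, hu, hfu⟩ := intermediate_value_Ioo' hy1.le
      (hc.mono (fun t ht => lt_of_lt_of_le hy0 ht.1)) (show A ∈ Ioo (f x₁) (f y) from ⟨h, hyA⟩)
    exact ⟨u, hy0.trans hu.1, hu.2, hfu⟩
  have hhigh : A < f x₂ → ∃ w, x₂ < w ∧ f w = A := by
    intro h
    obtain ⟨u, hu, hfu⟩ := intermediate_value_Ioo' hz2.le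
      (hc.mono (fun t ht => lt_of_lt_of_le (h1.trans h12) ht.1))
      (show A ∈ Ioo (f z) (f x₂) from ⟨hzA, h⟩)
    exact ⟨u, hu.1, hfu⟩
  have hη : f x₁ < f x₂ := hm ⟨le_rfl, h12.le⟩ ⟨h12.le, le_rfl⟩ h12
  refine ⟨?_, ?_⟩
  · rintro ⟨hA1, hA2⟩
    obtain ⟨u, hu0, hu1, hfu⟩ := hlow hA1
    obtain ⟨w, hw2, hfw⟩ := hhigh hA2
    obtain ⟨v, ⟨hv1, hv2⟩, hfv⟩ := intermediate_value_Ioo h12.le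
      (hc.mono (fun t ht => lt_of_lt_of_le h1 ht.1)) (show A ∈ Ioo (f x₁) (f x₂) from ⟨hA1, hA2⟩)
    have : {x : ℝ | 0 < x ∧ f x = A} = {u, v, w} := by
      ext x
      simp only [mem_setOf_eq, mem_insert_iff, mem_singleton_iff]
      constructor
      · rintro ⟨hx0, hx⟩
        rcases le_or_gt x x₁ with h | h
        · left; exact ha.injOn ⟨hx0, h⟩ ⟨hu0, hu1.le⟩ (hx.trans hfu.symm)
        rcases le_or_gt x x₂ with h' | h'
        · right; left; exact hm.injOn ⟨h.le, h'⟩ ⟨hv1.le, hv2.le⟩ (hx.trans hfv.symm)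
        · right; right; exact ha2.injOn h'.le hw2.le (hx.trans hfw.symm)
      · rintro (rfl | rfl | rfl)
        · exact ⟨hu0, hfu⟩
        · exact ⟨h1.trans hv1, hfv⟩
        · exact ⟨(h1.trans h12).trans hw2, hfw⟩
    rw [this, Set.ncard_eq_three]
    exact ⟨u, v, w, (hu1.trans hv1).ne,
      (hu1.trans (h12.trans hw2)).ne, (hv2.trans hw2).ne, rfl⟩
  · rintro (hA | hA)
    · obtain ⟨w, hw2, hfw⟩ := hhigh (hA ▸ hη)
      have : {x : ℝ | 0 < x ∧ f x = A} = {x₁, w} := by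
        ext x
        simp only [mem_setOf_eq, mem_insert_iff, mem_singleton_iff]
        constructor
        · rintro ⟨hx0, hx⟩
          rcases le_or_gt x x₁ with h | h
          · left; exact ha.injOn ⟨hx0, h⟩ ⟨h1, le_rfl⟩ (hx.trans hA)
          rcases le_or_gt x x₂ with h' | h'
          · left; exact hm.injOn ⟨h.le, h'⟩ ⟨le_rfl, h12.le⟩ (hx.trans hA)
          · right; exact ha2.injOn h'.le hw2.le (hx.trans hfw.symm)
        · rintro (rfl | rfl)
          · exact ⟨h1, hA.symm⟩
          · exact ⟨(h1.trans h12).trans hw2, hfw⟩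
      rw [this, Set.ncard_pair (h12.trans hw2).ne]
    · obtain ⟨w, hw0, hw1, hfw⟩ := hlow (hA ▸ hη)
      have : {x : ℝ | 0 < x ∧ f x = A} = {w, x₂} := by
        ext x
        simp only [mem_setOf_eq, mem_insert_iff, mem_singleton_iff]
        constructor
        · rintro ⟨hx0, hx⟩
          rcases le_or_gt x x₁ with h | h
          · left; exact ha.injOn ⟨hx0, h⟩ ⟨hw0, hw1.le⟩ (hx.trans hfw.symm)
          rcases le_or_gt x x₂ with h' | h'
          · right; exact hm.injOn ⟨h.le, h'⟩ ⟨h12.le, le_rfl⟩ (hx.trans hA)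
          · right; exact ha2.injOn h'.le (le_refl x₂) (hx.trans hA)
        · rintro (rfl | rfl)
          · exact ⟨hw0, hfw⟩
          · exact ⟨h1.trans h12, hA.symm⟩
      rw [this, Set.ncard_pair (hw1.trans h12).ne]

theorem aux_deriv (B : ℝ) (hB : 1 < B) (k : ℕ) (hk : 2 ≤ k) (x : ℝ) (hx : 0 < x) :
    HasDerivAt (fun x : ℝ => (1 / x) * ((1 + x) / (B + x)) ^ k)
      (-(x ^ 2 + (2 - (B - 1) * ((k : ℝ) - 1)) * x + B) *
        (((1 + x) / (B + x)) ^ (k - 1) / (x ^ 2 * (B + x) ^ 2))) x := by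
  have hBx : B + x ≠ 0 := by positivity
  have h1 : HasDerivAt (fun x : ℝ => 1 / x) (-(x ^ 2)⁻¹) x := by
    simpa using hasDerivAt_inv hx.ne'
  have h2 : HasDerivAt (fun x : ℝ => (1 + x) / (B + x))
      ((1 * (B + x) - (1 + x) * 1) / (B + x) ^ 2) x :=
    ((hasDerivAt_id x).const_add 1).div ((hasDerivAt_id x).const_add B) hBx
  have h3 := h1.mul (h2.pow k)
  refine h3.congr_deriv ?_
  obtain ⟨m, rfl⟩ : ∃ m, k = m + 1 := ⟨k - 1, by omega⟩
  simp only [Nat.add_sub_cancel, Pi.pow_apply]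
  rw [pow_succ ((1 + x) / (B + x)) m]
  generalize ((1 + x) / (B + x)) ^ m = P
  push_cast
  field_simp
  ring

theorem aux_B (q k : ℕ) (hq : 3 ≤ q) (hk : 2 ≤ k) (b : ℝ)
    (hb : b > (Real.sqrt (((q : ℝ) - 2) ^ 2 * ((k : ℝ) - 1) ^ 2 +
        4 * ((q : ℝ) - 1) * ((k : ℝ) + 1) ^ 2) - ((q : ℝ) - 2) * ((k : ℝ) - 1)) /
        (2 * ((k : ℝ) - 1))) :
    0 < b ∧ ((q:ℝ) - 1) * ((k:ℝ) + 1) ^ 2 < ((k:ℝ) - 1) ^ 2 * (b * (b + q - 2)) := by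
  have hq' : (3:ℝ) ≤ q := by exact_mod_cast hq
  have hk' : (2:ℝ) ≤ k := by exact_mod_cast hk
  set D := ((q : ℝ) - 2) ^ 2 * ((k : ℝ) - 1) ^ 2 + 4 * ((q : ℝ) - 1) * ((k : ℝ) + 1) ^ 2 with hD
  have hpos : 0 < 4 * ((q : ℝ) - 1) * ((k : ℝ) + 1) ^ 2 := by
    have : 0 < (q:ℝ) - 1 := by linarith
    positivity
  have hs : ((q : ℝ) - 2) * ((k : ℝ) - 1) < Real.sqrt D := by
    apply Real.lt_sqrt_of_sq_lt; rw [mul_pow]; linarith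
  rw [gt_iff_lt, div_lt_iff₀ (by linarith)] at hb
  have hsq : Real.sqrt D ^ 2 = D := Real.sq_sqrt (by positivity)
  have hb0 : 0 < b := by
    by_contra h
    nlinarith
  refine ⟨hb0, ?_⟩
  have h0 : 0 ≤ Real.sqrt D := Real.sqrt_nonneg D
  have : Real.sqrt D ^ 2 < (b * (2 * ((k:ℝ) - 1)) + ((q : ℝ) - 2) * ((k : ℝ) - 1)) ^ 2 :=
    pow_lt_pow_left₀ (by linarith) h0 (by norm_num)
  rw [hsq, hD] at this
  nlinarith

theorem aux_roots (B K : ℝ) (hK : 1 ≤ K) (hB : (K + 2) ^ 2 < K ^ 2 * B) :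
    1 < B ∧ ∃ x₁ x₂ : ℝ, 0 < x₁ ∧ x₁ < x₂ ∧
      ∀ x, x ^ 2 + (2 - (B - 1) * K) * x + B = (x - x₁) * (x - x₂) := by
  have hB1 : 1 < B := by
    by_contra h
    nlinarith [sq_nonneg K]
  refine ⟨hB1, ?_⟩
  set s := Real.sqrt B with hs
  have hs0 : 0 ≤ s := Real.sqrt_nonneg B
  have hsq : s ^ 2 = B := Real.sq_sqrt (by linarith)
  have hKs : K + 2 < K * s := by
    apply lt_of_pow_lt_pow_left₀ 2 (by positivity)
    rw [mul_pow, hsq]; exact hB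
  set p := (B - 1) * K - 2 with hp
  have hps : 2 * s < p := by
    rw [hp, ← hsq]; nlinarith
  have hd : 0 < p ^ 2 - 4 * B := by rw [← hsq]; nlinarith
  have hr : Real.sqrt (p ^ 2 - 4 * B) ^ 2 = p ^ 2 - 4 * B := Real.sq_sqrt hd.le
  have hr0 : 0 < Real.sqrt (p ^ 2 - 4 * B) := Real.sqrt_pos.2 hd
  have hrp : Real.sqrt (p ^ 2 - 4 * B) < p := by
    rw [Real.sqrt_lt' (by linarith)]; linarith
  refine ⟨(p - Real.sqrt (p ^ 2 - 4 * B)) / 2, (p + Real.sqrt (p ^ 2 - 4 * B)) / 2,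
    by linarith, by linarith, fun x => ?_⟩
  linear_combination (1/4) * hr

/-- for `q ≥ 3`, `k ≥ 2` and `b > b_c`, with
`A = (q-1)^k/(b+q-2)^{k+1}` and `B = b(b+q-2)/(q-1)`:
(i) the quadratic `x² + (2 − (B−1)(k−1))x + B = 0` has two distinct positive
roots `x₁ < x₂`; (ii) with `ηᵢ = (1/xᵢ)((1+xᵢ)/(B+xᵢ))^k` one has `η₁ ≠ η₂`,
the equation `A·x = ((1+x)/(B+x))^k` has exactly three positive solutions when
`A` lies strictly between `η₁` and `η₂`, and exactly two when `A ∈ {η₁, η₂}`. -/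
theorem stmt5 (q k : ℕ) (hq : 3 ≤ q) (hk : 2 ≤ k) (b : ℝ)
    (hb : b > (Real.sqrt (((q : ℝ) - 2) ^ 2 * ((k : ℝ) - 1) ^ 2 +
        4 * ((q : ℝ) - 1) * ((k : ℝ) + 1) ^ 2) - ((q : ℝ) - 2) * ((k : ℝ) - 1)) /
        (2 * ((k : ℝ) - 1)))
    (A B : ℝ)
    (hA : A = ((q : ℝ) - 1) ^ k / (b + (q : ℝ) - 2) ^ (k + 1))
    (hB : B = b * (b + (q : ℝ) - 2) / ((q : ℝ) - 1)) :
    ∃ x₁ x₂ η₁ η₂ : ℝ, 0 < x₁ ∧ x₁ < x₂ ∧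
      x₁ ^ 2 + (2 - (B - 1) * ((k : ℝ) - 1)) * x₁ + B = 0 ∧
      x₂ ^ 2 + (2 - (B - 1) * ((k : ℝ) - 1)) * x₂ + B = 0 ∧
      η₁ = (1 / x₁) * ((1 + x₁) / (B + x₁)) ^ k ∧
      η₂ = (1 / x₂) * ((1 + x₂) / (B + x₂)) ^ k ∧
      η₁ ≠ η₂ ∧
      (min η₁ η₂ < A ∧ A < max η₁ η₂ →
        {x : ℝ | 0 < x ∧ A * x = ((1 + x) / (B + x)) ^ k}.ncard = 3) ∧
      ((A = η₁ ∨ A = η₂) →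
        {x : ℝ | 0 < x ∧ A * x = ((1 + x) / (B + x)) ^ k}.ncard = 2) := by
  have hq' : (3:ℝ) ≤ q := by exact_mod_cast hq
  have hk' : (2:ℝ) ≤ k := by exact_mod_cast hk
  obtain ⟨hb0, hbb⟩ := aux_B q k hq hk b hb
  have hA0 : 0 < A := by
    rw [hA]
    have h1 : 0 < (q:ℝ) - 1 := by linarith
    have h2 : 0 < b + (q:ℝ) - 2 := by linarith
    positivity
  have hBK : (((k:ℝ) - 1) + 2) ^ 2 < ((k:ℝ) - 1) ^ 2 * B := by
    rw [hB, ← mul_div_assoc, lt_div_iff₀ (by linarith)]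
    linarith
  obtain ⟨hB1, x₁, x₂, h1, h12, hfac⟩ := aux_roots B ((k:ℝ) - 1) (by linarith) hBK
  have hder := aux_deriv B hB1 k hk
  set f : ℝ → ℝ := fun x : ℝ => (1 / x) * ((1 + x) / (B + x)) ^ k with hf
  have hcont : ContinuousOn f (Set.Ioi 0) := fun x hx =>
    (hder x hx).continuousAt.continuousWithinAt
  have hpos : ∀ x : ℝ, 0 < x → 0 < ((1 + x) / (B + x)) ^ (k - 1) / (x ^ 2 * (B + x) ^ 2) := by
    intro x hx
    positivity
  have ha : StrictAntiOn f (Set.Ioc 0 x₁) := by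
    apply strictAntiOn_of_deriv_neg (convex_Ioc 0 x₁) (hcont.mono fun t ht => ht.1)
    intro x hx
    rw [interior_Ioc] at hx
    rw [(hder x hx.1).deriv, hfac]
    apply mul_neg_of_neg_of_pos _ (hpos x hx.1)
    nlinarith [hx.2, mul_pos (sub_pos.2 hx.2) (sub_pos.2 (hx.2.trans h12))]
  have hm : StrictMonoOn f (Set.Icc x₁ x₂) := by
    apply strictMonoOn_of_deriv_pos (convex_Icc x₁ x₂)
      (hcont.mono fun t ht => lt_of_lt_of_le h1 ht.1)
    intro x hx
    rw [interior_Icc] at hx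
    have hx0 := h1.trans hx.1
    rw [(hder x hx0).deriv, hfac]
    apply mul_pos _ (hpos x hx0)
    nlinarith [mul_pos (sub_pos.2 hx.1) (sub_pos.2 hx.2)]
  have ha2 : StrictAntiOn f (Set.Ici x₂) := by
    apply strictAntiOn_of_deriv_neg (convex_Ici x₂)
      (hcont.mono fun t ht => lt_of_lt_of_le (h1.trans h12) ht)
    intro x hx
    rw [interior_Ici] at hx
    have hx2 : x₂ < x := hx
    have hx0 := (h1.trans h12).trans hx2
    rw [(hder x hx0).deriv, hfac]
    apply mul_neg_of_neg_of_pos _ (hpos x hx0)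
    nlinarith [mul_pos (sub_pos.2 (h12.trans hx2)) (sub_pos.2 hx2)]
  have hB0 : 0 < B := by linarith
  have hs : ∃ y, 0 < y ∧ y < x₁ ∧ A < f y := by
    have hc : 0 < 1 / x₁ + A * B ^ k := by positivity
    refine ⟨1 / (1 / x₁ + A * B ^ k), by positivity, ?_, ?_⟩
    · rw [div_lt_iff₀ hc, mul_add, mul_one_div_cancel h1.ne']
      have : 0 < x₁ * (A * B ^ k) := by positivity
      linarith
    · have hy : 0 < 1 / (1 / x₁ + A * B ^ k) := by positivity
      have hyy : 1 / (1 / (1 / x₁ + A * B ^ k)) = 1 / x₁ + A * B ^ k := one_div_one_div _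
      simp only [hf]
      rw [hyy]
      generalize 1 / (1 / x₁ + A * B ^ k) = y at hy
      have h3 : 1 / B ≤ (1 + y) / (B + y) := by
        rw [div_le_div_iff₀ hB0 (by positivity)]
        nlinarith
      have h4 : (1 / B) ^ k ≤ ((1 + y) / (B + y)) ^ k := pow_le_pow_left₀ (by positivity) h3 k
      calc A < (1 / x₁ + A * B ^ k) * (1 / B) ^ k := by
            rw [one_div_pow, add_mul, mul_assoc A, mul_one_div_cancel (by positivity)]
            have : 0 < 1 / x₁ * (1 / B ^ k) := by positivity
            linarith
        _ ≤ _ := mul_le_mul_of_nonneg_left h4 hc.le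
  have hl : ∃ y, x₂ < y ∧ f y < A := by
    have hx2 : 0 < x₂ := h1.trans h12
    refine ⟨x₂ + 1 / A, by linarith [one_div_pos.2 hA0], ?_⟩
    have hy : 0 < x₂ + 1 / A := by positivity
    have h5 : 1 / (x₂ + 1 / A) < A := by
      rw [div_lt_iff₀ hy, mul_add, mul_one_div_cancel hA0.ne']
      have := mul_pos hA0 hx2
      linarith
    refine lt_of_le_of_lt ?_ h5
    simp only [hf]
    apply mul_le_of_le_one_right (by positivity)
    apply pow_le_one₀ (by positivity)
    rw [div_le_one (by positivity)]
    linarith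
  have hη : f x₁ < f x₂ := hm ⟨le_rfl, h12.le⟩ ⟨h12.le, le_rfl⟩ h12
  have hset : {x : ℝ | 0 < x ∧ A * x = ((1 + x) / (B + x)) ^ k} = {x : ℝ | 0 < x ∧ f x = A} := by
    ext x
    simp only [Set.mem_setOf_eq, hf]
    refine and_congr_right fun hx => ?_
    rw [one_div_mul_eq_div, div_eq_iff hx.ne']
    exact eq_comm
  obtain ⟨c3, c2⟩ := aux_count f A x₁ x₂ h1 h12 hcont ha hm ha2 hs hl
  refine ⟨x₁, x₂, f x₁, f x₂, h1, h12, ?_, ?_, rfl, rfl, hη.ne, ?_, ?_⟩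
  · rw [hfac]; ring
  · rw [hfac]; ring
  · rw [hset, min_eq_left hη.le, max_eq_right hη.le]; exact c3
  · rw [hset]; exact c2
end

section
/- Let q ≥ 3 be an integer and b > 0 real, and consider the equation z = ((z(b+q−2)+1)/((q−1)z+b))² in z > 0. Then: (i) if b > 1 + 2√(q−1) and b ≠ q+1, the equation has exactly three distinct positive solutions; (ii) if b = 1 + 2√(q−1), it has exactly two distinct positive solutions; (iii) if 0 < b < 1 + 2√(q−1), it has exactly one positive solution, namely z = 1. -/
lemma aux_mem (m b z : ℝ) (hm : 2 ≤ m) (hb : 0 < b) :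
    (0 < z ∧ z = ((z * (b + m - 1) + 1) / (m * z + b)) ^ 2) ↔
    ∃ x, 0 < x ∧ z = x ^ 2 ∧ (x = 1 ∨ m * x ^ 2 - (b - 1) * x + 1 = 0) := by
  constructor
  · rintro ⟨hz, h⟩
    have hd : 0 < m * z + b := by positivity
    have hn : 0 < z * (b + m - 1) + 1 := by
      have : 0 < b + m - 1 := by linarith
      positivity
    refine ⟨(z * (b + m - 1) + 1) / (m * z + b), by positivity, h, ?_⟩
    set x := (z * (b + m - 1) + 1) / (m * z + b) with hx
    have h2 : x * (m * z + b) = z * (b + m - 1) + 1 := by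
      rw [hx]; field_simp
    have h3 : (x - 1) * (m * x ^ 2 - (b - 1) * x + 1) = 0 := by
      rw [h] at h2
      linear_combination h2
    rcases mul_eq_zero.1 h3 with h4 | h4
    · left; linarith
    · right; exact h4
  · rintro ⟨x, hx, rfl, h⟩
    have hd : 0 < m * x ^ 2 + b := by positivity
    refine ⟨by positivity, ?_⟩
    have h3 : (x - 1) * (m * x ^ 2 - (b - 1) * x + 1) = 0 := by
      rcases h with h | h
      · rw [h]; ring
      · rw [h]; ring
    congr 1
    rw [eq_div_iff hd.ne']
    linear_combination h3

/-- number of positive solutions of the `k = 2`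
translation-invariant fixed-point equation
`z = ((z(b+q−2)+1)/((q−1)z+b))²` of the (2,q)-Ising-Potts model on the
invariant set `I₁`: three if `b > 1 + 2√(q−1)` and `b ≠ q+1`, two if
`b = 1 + 2√(q−1)`, and exactly one (namely `z = 1`) if
`0 < b < 1 + 2√(q−1)`. -/
theorem stmt8 (q : ℕ) (hq : 3 ≤ q) (b : ℝ) (hb : 0 < b) :
    (b > 1 + 2 * Real.sqrt ((q : ℝ) - 1) → b ≠ (q : ℝ) + 1 →
      {z : ℝ | 0 < z ∧
        z = ((z * (b + (q : ℝ) - 2) + 1) / (((q : ℝ) - 1) * z + b)) ^ 2}.ncard = 3) ∧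
    (b = 1 + 2 * Real.sqrt ((q : ℝ) - 1) →
      {z : ℝ | 0 < z ∧
        z = ((z * (b + (q : ℝ) - 2) + 1) / (((q : ℝ) - 1) * z + b)) ^ 2}.ncard = 2) ∧
    (b < 1 + 2 * Real.sqrt ((q : ℝ) - 1) →
      {z : ℝ | 0 < z ∧
        z = ((z * (b + (q : ℝ) - 2) + 1) / (((q : ℝ) - 1) * z + b)) ^ 2} = {1}) := by
  have hm : (2 : ℝ) ≤ (q : ℝ) - 1 := by
    have : (3 : ℝ) ≤ q := by exact_mod_cast hq
    linarith
  have hbq : b + (q : ℝ) - 2 = b + ((q : ℝ) - 1) - 1 := by ring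
  have hq1 : (q : ℝ) + 1 = ((q : ℝ) - 1) + 2 := by ring
  rw [hbq, hq1]
  generalize (q : ℝ) - 1 = m at *
  simp only [aux_mem m b _ hm hb]
  set s := Real.sqrt m with hs
  have hs2 : s ^ 2 = m := Real.sq_sqrt (by linarith)
  have hs0 : 0 < s := Real.sqrt_pos.2 (by linarith)
  have hs1 : 1 < s := by nlinarith
  have hm0 : 0 < m := by linarith
  refine ⟨fun h1 h2 => ?_, fun h1 => ?_, fun h1 => ?_⟩
  · have hD : 0 < (b - 1) ^ 2 - 4 * m := by nlinarith
    obtain ⟨d, hd0, hd2⟩ : ∃ d : ℝ, 0 < d ∧ d ^ 2 = (b - 1) ^ 2 - 4 * m :=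
      ⟨_, Real.sqrt_pos.2 hD, Real.sq_sqrt hD.le⟩
    have hdb : d < b - 1 := by nlinarith
    obtain ⟨r, hr⟩ : ∃ r, r = (b - 1 - d) / (2 * m) := ⟨_, rfl⟩
    obtain ⟨t, ht⟩ : ∃ t, t = (b - 1 + d) / (2 * m) := ⟨_, rfl⟩
    have hr0 : 0 < r := by rw [hr]; apply div_pos <;> linarith
    have hrt : r < t := by rw [hr, ht]; gcongr; linarith
    have hfac : ∀ x, m * x ^ 2 - (b - 1) * x + 1 = m * ((x - r) * (x - t)) := by
      intro x
      rw [hr, ht]; field_simp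
      linear_combination hd2
    have hne : m * ((1 - r) * (1 - t)) ≠ 0 := by
      rw [← hfac]; intro h; apply h2; linarith
    have hr1 : r ≠ 1 := by rintro h; apply hne; rw [h]; ring
    have ht1 : t ≠ 1 := by rintro h; apply hne; rw [h]; ring
    have hS : {z : ℝ | ∃ x, 0 < x ∧ z = x ^ 2 ∧
        (x = 1 ∨ m * x ^ 2 - (b - 1) * x + 1 = 0)} = {1, r ^ 2, t ^ 2} := by
      ext z
      simp only [Set.mem_setOf_eq, Set.mem_insert_iff, Set.mem_singleton_iff, hfac,
        mul_eq_zero, hm0.ne', false_or, sub_eq_zero]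
      constructor
      · rintro ⟨x, hx, rfl, rfl | rfl | rfl⟩ <;> simp
      · rintro (rfl | rfl | rfl)
        · exact ⟨1, by norm_num, by norm_num, by simp⟩
        · exact ⟨r, hr0, rfl, by simp⟩
        · exact ⟨t, hr0.trans hrt, rfl, by simp⟩
    rw [hS, Set.ncard_eq_three]
    refine ⟨_, _, _, ?_, ?_, ?_, rfl⟩
    · intro h; exact hr1 (by nlinarith)
    · intro h; exact ht1 (by nlinarith)
    · intro h; nlinarith
  · have hfac : ∀ x, m * x ^ 2 - (b - 1) * x + 1 = (s * x - 1) ^ 2 := by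
      intro x
      rw [h1, ← hs2]; ring
    have hS : {z : ℝ | ∃ x, 0 < x ∧ z = x ^ 2 ∧
        (x = 1 ∨ m * x ^ 2 - (b - 1) * x + 1 = 0)} = {1, (1 / s) ^ 2} := by
      ext z
      simp only [Set.mem_setOf_eq, Set.mem_insert_iff, Set.mem_singleton_iff, hfac]
      constructor
      · rintro ⟨x, hx, rfl, rfl | h⟩
        · simp
        · right
          have h' : s * x - 1 = 0 := pow_eq_zero_iff (two_ne_zero) |>.1 h
          congr 1
          rw [eq_div_iff hs0.ne']; linarith
      · rintro (rfl | rfl)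
        · exact ⟨1, by norm_num, by norm_num, by simp⟩
        · refine ⟨1 / s, by positivity, rfl, Or.inr ?_⟩
          field_simp
          ring
    rw [hS, Set.ncard_eq_two]
    refine ⟨_, _, ?_, rfl⟩
    have h3 : 1 / s < 1 := by rw [div_lt_one hs0]; exact hs1
    have h4 : 0 < 1 / s := by positivity
    intro h; nlinarith
  · ext z
    simp only [Set.mem_setOf_eq, Set.mem_singleton_iff]
    constructor
    · rintro ⟨x, hx, rfl, rfl | h⟩
      · simp
      · exfalso
        have : 0 < (1 + 2 * s - b) * x := mul_pos (by linarith) hx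
        have h5 : m * x ^ 2 = (s * x) ^ 2 := by rw [← hs2]; ring
        nlinarith [sq_nonneg (s * x - 1)]
    · rintro rfl
      exact ⟨1, by norm_num, by norm_num, by simp⟩
end

section
/- The polynomial g₂(a) = 3a⁸ + 12a⁷ + 12a⁶ − 28a⁵ − 70a⁴ − 60a³ − 36a² − 52a − 5 has exactly one positive real root, and this root lies in the open interval (1, 2); in particular g₂(1) = −224 < 0 and g₂(2) = 323 > 0, g₂(a) < 0 for 0 < a below the root, and g₂(a) > 0 for a above the root. -/
/-- the polynomial
`g₂(a) = 3a⁸ + 12a⁷ + 12a⁶ − 28a⁵ − 70a⁴ − 60a³ − 36a² − 52a − 5`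
has exactly one positive real root, which lies in `(1, 2)`; moreover
`g₂(1) = −224`, `g₂(2) = 323`, `g₂` is negative on positive arguments below
the root and positive above it. -/
theorem stmt13 (g₂ : ℝ → ℝ)
    (hg : ∀ a : ℝ, g₂ a = 3 * a ^ 8 + 12 * a ^ 7 + 12 * a ^ 6 - 28 * a ^ 5 -
      70 * a ^ 4 - 60 * a ^ 3 - 36 * a ^ 2 - 52 * a - 5) :
    ∃ r : ℝ, 1 < r ∧ r < 2 ∧ g₂ r = 0 ∧
      (∀ a : ℝ, 0 < a → g₂ a = 0 → a = r) ∧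
      g₂ 1 = -224 ∧ g₂ 2 = 323 ∧
      (∀ a : ℝ, 0 < a → a < r → g₂ a < 0) ∧
      (∀ a : ℝ, r < a → 0 < g₂ a) := by
  have key : ∀ a b : ℝ, 0 < a → a < b → g₂ a * b ^ 5 < g₂ b * a ^ 5 := by
    intro a b ha hab
    have hb : 0 < b := ha.trans hab
    have p : ∀ n : ℕ, n ≠ 0 → 0 < b ^ n - a ^ n := fun n hn =>
      sub_pos.mpr (pow_lt_pow_left₀ hab ha.le hn)
    have p1 : 0 < b - a := sub_pos.mpr hab
    have p2 := p 2 (by norm_num)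
    have p3 := p 3 (by norm_num)
    have p4 := p 4 (by norm_num)
    have p5 := p 5 (by norm_num)
    have e : g₂ b * a ^ 5 - g₂ a * b ^ 5 =
        3 * (a ^ 5 * b ^ 5) * (b ^ 3 - a ^ 3) + 12 * (a ^ 5 * b ^ 5) * (b ^ 2 - a ^ 2)
        + 12 * (a ^ 5 * b ^ 5) * (b - a) + 70 * (a ^ 4 * b ^ 4) * (b - a)
        + 60 * (a ^ 3 * b ^ 3) * (b ^ 2 - a ^ 2) + 36 * (a ^ 2 * b ^ 2) * (b ^ 3 - a ^ 3)
        + 52 * (a * b) * (b ^ 4 - a ^ 4) + 5 * (b ^ 5 - a ^ 5) := by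
      rw [hg, hg]; ring
    have : 0 < g₂ b * a ^ 5 - g₂ a * b ^ 5 := by rw [e]; positivity
    linarith
  have h1 : g₂ 1 = -224 := by rw [hg]; norm_num
  have h2 : g₂ 2 = 323 := by rw [hg]; norm_num
  have hc : Continuous g₂ := by
    rw [funext hg]; fun_prop
  obtain ⟨r, ⟨hr1, hr2⟩, hr⟩ : (0 : ℝ) ∈ Set.image g₂ (Set.Ioo 1 2) :=
    intermediate_value_Ioo (by norm_num) hc.continuousOn
      ⟨by rw [h1]; norm_num, by rw [h2]; norm_num⟩
  have r0 : 0 < r := by linarith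
  have neg : ∀ a : ℝ, 0 < a → a < r → g₂ a < 0 := by
    intro a ha har
    have h := key a r ha har
    rw [hr, zero_mul] at h
    exact neg_of_mul_neg_left h (by positivity)
  have pos : ∀ a : ℝ, r < a → 0 < g₂ a := by
    intro a har
    have h := key r a r0 har
    rw [hr, zero_mul] at h
    exact pos_of_mul_pos_left h (by positivity)
  refine ⟨r, hr1, hr2, hr, ?_, h1, h2, neg, pos⟩
  intro a ha h0
  rcases lt_trichotomy a r with h | h | h
  · exact absurd h0 (neg a ha h).ne
  · exact h
  · exact absurd h0 (ne_of_gt (pos a h))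
end

section
/- For a = 3/2, the quartic P_{3/2}(x) = −4(5/2)⁴x⁴ + 2·(1/2)·(5/2)⁶x³ − (5/2)²(2(3/2)⁵+5(3/2)⁴+6(3/2)³+6(3/2)²+8(3/2)+1)x² + (3/2)(3(3/2)²+4(3/2)−1)(5/2)³x − ((5/2)⁵+(3/2)²) satisfies P_{3/2}(x) < 0 for every x ≥ 0; in particular the equation P_{3/2}(x) = 0 has no nonnegative real solutions. -/
/-- for `a = 3/2`, the quartic `P_{3/2}` of the
(2,3)-Ising-Potts model is strictly negative on `[0, ∞)`; in particular
`P_{3/2}(x) = 0` has no nonnegative real solutions. -/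
theorem stmt16 :
    (∀ x : ℝ, 0 ≤ x →
      -4 * ((5 : ℝ) / 2) ^ 4 * x ^ 4 + 2 * (1 / 2) * ((5 : ℝ) / 2) ^ 6 * x ^ 3 -
        ((5 : ℝ) / 2) ^ 2 * (2 * ((3 : ℝ) / 2) ^ 5 + 5 * ((3 : ℝ) / 2) ^ 4 +
          6 * ((3 : ℝ) / 2) ^ 3 + 6 * ((3 : ℝ) / 2) ^ 2 + 8 * ((3 : ℝ) / 2) + 1) * x ^ 2 +
        ((3 : ℝ) / 2) * (3 * ((3 : ℝ) / 2) ^ 2 + 4 * ((3 : ℝ) / 2) - 1) * ((5 : ℝ) / 2) ^ 3 * x -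
        (((5 : ℝ) / 2) ^ 5 + ((3 : ℝ) / 2) ^ 2) < 0) ∧
    ¬∃ x : ℝ, 0 ≤ x ∧
      -4 * ((5 : ℝ) / 2) ^ 4 * x ^ 4 + 2 * (1 / 2) * ((5 : ℝ) / 2) ^ 6 * x ^ 3 -
        ((5 : ℝ) / 2) ^ 2 * (2 * ((3 : ℝ) / 2) ^ 5 + 5 * ((3 : ℝ) / 2) ^ 4 +
          6 * ((3 : ℝ) / 2) ^ 3 + 6 * ((3 : ℝ) / 2) ^ 2 + 8 * ((3 : ℝ) / 2) + 1) * x ^ 2 +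
        ((3 : ℝ) / 2) * (3 * ((3 : ℝ) / 2) ^ 2 + 4 * ((3 : ℝ) / 2) - 1) * ((5 : ℝ) / 2) ^ 3 * x -
        (((5 : ℝ) / 2) ^ 5 + ((3 : ℝ) / 2) ^ 2) = 0 := by
  have key : ∀ x : ℝ, 0 ≤ x →
      -4 * ((5 : ℝ) / 2) ^ 4 * x ^ 4 + 2 * (1 / 2) * ((5 : ℝ) / 2) ^ 6 * x ^ 3 -
        ((5 : ℝ) / 2) ^ 2 * (2 * ((3 : ℝ) / 2) ^ 5 + 5 * ((3 : ℝ) / 2) ^ 4 +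
          6 * ((3 : ℝ) / 2) ^ 3 + 6 * ((3 : ℝ) / 2) ^ 2 + 8 * ((3 : ℝ) / 2) + 1) * x ^ 2 +
        ((3 : ℝ) / 2) * (3 * ((3 : ℝ) / 2) ^ 2 + 4 * ((3 : ℝ) / 2) - 1) * ((5 : ℝ) / 2) ^ 3 * x -
        (((5 : ℝ) / 2) ^ 5 + ((3 : ℝ) / 2) ^ 2) < 0 := by
    intro x _
    nlinarith [sq_nonneg (x ^ 2 - 25 / 32 * x), sq_nonneg (x - 3 / 10), sq_nonneg x]
  exact ⟨key, fun ⟨x, hx, h⟩ => (key x hx).ne h⟩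
end

section
/- For a = 3, the quartic P₃(x) = −4·4⁴x⁴ + 2·2·4⁶x³ − 4²(2·3⁵+5·3⁴+6·3³+6·3²+8·3+1)x² + 3(3·3²+4·3−1)·4³x − (4⁵+3²) has exactly two distinct roots in (0, ∞). -/
def quarticP3 (x : ℝ) : ℝ := -1024 * x ^ 4 + 16384 * x ^ 3 - 18112 * x ^ 2 + 7296 * x - 1033

lemma quarticP3_cont : Continuous quarticP3 := by
  unfold quarticP3; fun_prop

lemma quarticP3_deriv (x : ℝ) :
    deriv quarticP3 x = -4096 * x ^ 3 + 49152 * x ^ 2 - 36224 * x + 7296 := by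
  have h : HasDerivAt quarticP3 (-1024 * (4 * x ^ 3) + 16384 * (3 * x ^ 2)
      - 18112 * (2 * x) + 7296 * 1) x := by
    have h1 := (hasDerivAt_pow 4 x).const_mul (-1024 : ℝ)
    have h2 := (hasDerivAt_pow 3 x).const_mul (16384 : ℝ)
    have h3 := (hasDerivAt_pow 2 x).const_mul (18112 : ℝ)
    have h4 := (hasDerivAt_id x).const_mul (7296 : ℝ)
    have h5 := (((h1.add h2).sub h3).add h4).sub_const (1033 : ℝ)
    have h6 : HasDerivAt quarticP3 _ x := h5
    refine h6.congr_deriv ?_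
    norm_num
  rw [h.deriv]; ring

lemma quarticP3_mono : StrictMonoOn quarticP3 (Set.Icc 0 2) := by
  apply strictMonoOn_of_deriv_pos (convex_Icc 0 2) quarticP3_cont.continuousOn
  intro x hx
  rw [interior_Icc] at hx
  obtain ⟨h0, h2⟩ := hx
  rw [quarticP3_deriv]
  rcases le_total x 1 with h | h
  · have : 0 ≤ x ^ 2 * (1 - x) := mul_nonneg (sq_nonneg x) (by linarith)
    nlinarith [sq_nonneg (x - 283 / 704)]
  · have : 0 ≤ x ^ 2 * (2 - x) := mul_nonneg (sq_nonneg x) (by linarith)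
    nlinarith [sq_nonneg (x - 1)]

lemma quarticP3_anti : StrictAntiOn quarticP3 (Set.Ici 12) := by
  apply strictAntiOn_of_deriv_neg (convex_Ici 12) quarticP3_cont.continuousOn
  intro x hx
  rw [interior_Ici] at hx
  have hx' : 12 < x := hx
  rw [quarticP3_deriv]
  have : 0 ≤ x ^ 2 * (x - 12) := mul_nonneg (sq_nonneg x) (by linarith)
  nlinarith

lemma quarticP3_pos {x : ℝ} (h2 : 2 ≤ x) (h : x ≤ 14) : 0 < quarticP3 x := by
  have h1 : 0 ≤ (x - 2) * (14 - x) := mul_nonneg (by linarith) (by linarith)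
  have h3 : 0 ≤ x ^ 2 * (-1024 * x ^ 2 + 16384 * x - 18112) :=
    mul_nonneg (sq_nonneg x) (by nlinarith)
  unfold quarticP3
  nlinarith

/-- for `a = 3`, the quartic `P₃` of the (2,3)-Ising-Potts model
has exactly two distinct roots in `(0, ∞)`. -/
theorem stmt17 :
    {x : ℝ | 0 < x ∧
      -4 * (4 : ℝ) ^ 4 * x ^ 4 + 2 * 2 * (4 : ℝ) ^ 6 * x ^ 3 -
        (4 : ℝ) ^ 2 * (2 * 3 ^ 5 + 5 * 3 ^ 4 + 6 * 3 ^ 3 + 6 * 3 ^ 2 + 8 * 3 + 1) * x ^ 2 +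
        3 * (3 * 3 ^ 2 + 4 * 3 - 1) * (4 : ℝ) ^ 3 * x - ((4 : ℝ) ^ 5 + 3 ^ 2) = 0}.ncard
      = 2 := by
  have hf : ∀ x : ℝ, -4 * (4 : ℝ) ^ 4 * x ^ 4 + 2 * 2 * (4 : ℝ) ^ 6 * x ^ 3 -
        (4 : ℝ) ^ 2 * (2 * 3 ^ 5 + 5 * 3 ^ 4 + 6 * 3 ^ 3 + 6 * 3 ^ 2 + 8 * 3 + 1) * x ^ 2 +
        3 * (3 * 3 ^ 2 + 4 * 3 - 1) * (4 : ℝ) ^ 3 * x - ((4 : ℝ) ^ 5 + 3 ^ 2)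
        = quarticP3 x := by
    intro x; unfold quarticP3; ring
  simp only [hf]
  obtain ⟨r, ⟨hr0, hr2⟩, hr⟩ := intermediate_value_Ioo (show (0 : ℝ) ≤ 2 by norm_num)
    quarticP3_cont.continuousOn
    (show (0 : ℝ) ∈ Set.Ioo (quarticP3 0) (quarticP3 2) by
      unfold quarticP3; constructor <;> norm_num)
  obtain ⟨s, ⟨hs0, hs2⟩, hs⟩ := intermediate_value_Ioo' (show (14 : ℝ) ≤ 16 by norm_num)
    quarticP3_cont.continuousOn
    (show (0 : ℝ) ∈ Set.Ioo (quarticP3 16) (quarticP3 14) by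
      unfold quarticP3; constructor <;> norm_num)
  rw [Set.ncard_eq_two]
  refine ⟨r, s, by linarith, ?_⟩
  ext x
  simp only [Set.mem_ofPred_eq, Set.mem_insert_iff, Set.mem_singleton_iff]
  constructor
  · rintro ⟨hx, h⟩
    rcases le_total x 2 with h2 | h2
    · left
      exact quarticP3_mono.injOn ⟨hx.le, h2⟩ ⟨hr0.le, hr2.le⟩ (h.trans hr.symm)
    · rcases le_total x 14 with h3 | h3
      · exact absurd h (quarticP3_pos h2 h3).ne'
      · right
        exact quarticP3_anti.injOn (show (12 : ℝ) ≤ x by linarith)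
          (show (12 : ℝ) ≤ s by linarith) (h.trans hs.symm)
  · rintro (rfl | rfl)
    · exact ⟨hr0, hr⟩
    · exact ⟨by linarith, hs⟩
end

section
/- For a = 5, the quartic P₅(x) = −4·6⁴x⁴ + 2·4·6⁶x³ − 6²(2·5⁵+5·5⁴+6·5³+6·5²+8·5+1)x² + 5(3·5²+4·5−1)·6³x − (6⁵+5²) has exactly four distinct roots in (0, ∞). -/
/-- The quartic with its coefficients multiplied out. -/
noncomputable def quarticAux : Polynomial ℝ :=
  Polynomial.C (-5184) * Polynomial.X ^ 4 + Polynomial.C 373248 * Polynomial.X ^ 3 +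
    Polynomial.C (-371376) * Polynomial.X ^ 2 + Polynomial.C 101520 * Polynomial.X +
    Polynomial.C (-7801)

theorem quarticAux_natDegree : quarticAux.natDegree = 4 := by
  unfold quarticAux
  compute_degree!

theorem quarticAux_eval (x : ℝ) : quarticAux.eval x =
    -5184 * x ^ 4 + 373248 * x ^ 3 + -371376 * x ^ 2 + 101520 * x + -7801 := by
  simp [quarticAux]

theorem quarticAux_ne_zero : quarticAux ≠ 0 := by
  intro h
  have h4 := quarticAux_natDegree
  rw [h] at h4
  simp at h4

/-- for `a = 5`, the quartic `P₅` of the (2,3)-Ising-Potts model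
has exactly four distinct roots in `(0, ∞)`. -/
theorem stmt18 :
    {x : ℝ | 0 < x ∧
      -4 * (6 : ℝ) ^ 4 * x ^ 4 + 2 * 4 * (6 : ℝ) ^ 6 * x ^ 3 -
        (6 : ℝ) ^ 2 * (2 * 5 ^ 5 + 5 * 5 ^ 4 + 6 * 5 ^ 3 + 6 * 5 ^ 2 + 8 * 5 + 1) * x ^ 2 +
        5 * (3 * 5 ^ 2 + 4 * 5 - 1) * (6 : ℝ) ^ 3 * x - ((6 : ℝ) ^ 5 + 5 ^ 2) = 0}.ncard
      = 4 := by
  have hS : {x : ℝ | 0 < x ∧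
      -4 * (6 : ℝ) ^ 4 * x ^ 4 + 2 * 4 * (6 : ℝ) ^ 6 * x ^ 3 -
        (6 : ℝ) ^ 2 * (2 * 5 ^ 5 + 5 * 5 ^ 4 + 6 * 5 ^ 3 + 6 * 5 ^ 2 + 8 * 5 + 1) * x ^ 2 +
        5 * (3 * 5 ^ 2 + 4 * 5 - 1) * (6 : ℝ) ^ 3 * x - ((6 : ℝ) ^ 5 + 5 ^ 2) = 0}
      = {x : ℝ | 0 < x ∧ quarticAux.eval x = 0} := by
    ext x
    simp only [Set.mem_setOf_eq, quarticAux_eval]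
    constructor <;> rintro ⟨h, h'⟩ <;> refine ⟨h, ?_⟩ <;> linarith
  rw [hS]
  have hsub : {x : ℝ | 0 < x ∧ quarticAux.eval x = 0} ⊆ (quarticAux.roots.toFinset : Set ℝ) := by
    rintro x ⟨_, hx⟩
    simp [quarticAux_ne_zero, hx]
  have hfin := (Finset.finite_toSet quarticAux.roots.toFinset).subset hsub
  have hc (s : Set ℝ) : ContinuousOn (fun x => quarticAux.eval x) s :=
    quarticAux.continuous.continuousOn
  obtain ⟨x₁, ⟨a₁, b₁⟩, e₁⟩ := intermediate_value_Ioo (a := (1/10 : ℝ)) (b := 1/5)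
    (by norm_num) (hc _) (show (0 : ℝ) ∈ _ by
      constructor <;> simp only [quarticAux_eval] <;> norm_num)
  obtain ⟨x₂, ⟨a₂, b₂⟩, e₂⟩ := intermediate_value_Ioo' (a := (1/5 : ℝ)) (b := 2/5)
    (by norm_num) (hc _) (show (0 : ℝ) ∈ _ by
      constructor <;> simp only [quarticAux_eval] <;> norm_num)
  obtain ⟨x₃, ⟨a₃, b₃⟩, e₃⟩ := intermediate_value_Ioo (a := (2/5 : ℝ)) (b := 1)
    (by norm_num) (hc _) (show (0 : ℝ) ∈ _ by
      constructor <;> simp only [quarticAux_eval] <;> norm_num)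
  obtain ⟨x₄, ⟨a₄, b₄⟩, e₄⟩ := intermediate_value_Ioo' (a := (1 : ℝ)) (b := 71)
    (by norm_num) (hc _) (show (0 : ℝ) ∈ _ by
      constructor <;> simp only [quarticAux_eval] <;> norm_num)
  apply le_antisymm
  · calc _ ≤ (quarticAux.roots.toFinset : Set ℝ).ncard :=
          Set.ncard_le_ncard hsub (Finset.finite_toSet _)
      _ = quarticAux.roots.toFinset.card := Set.ncard_coe_finset _
      _ ≤ quarticAux.roots.card := Multiset.toFinset_card_le _
      _ ≤ quarticAux.natDegree := quarticAux.card_roots'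
      _ = 4 := quarticAux_natDegree
  · have h4 : (({x₁, x₂, x₃, x₄} : Finset ℝ) : Set ℝ).ncard = 4 := by
      rw [Set.ncard_coe_finset]
      have h12 : x₁ ≠ x₂ := by intro h; linarith
      have h13 : x₁ ≠ x₃ := by intro h; linarith
      have h14 : x₁ ≠ x₄ := by intro h; linarith
      have h23 : x₂ ≠ x₃ := by intro h; linarith
      have h24 : x₂ ≠ x₄ := by intro h; linarith
      have h34 : x₃ ≠ x₄ := by intro h; linarith
      simp [h12, h13, h14, h23, h24, h34]
    rw [← h4]
    refine Set.ncard_le_ncard ?_ hfin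
    intro x hx
    simp only [Finset.coe_insert, Finset.coe_singleton, Set.mem_insert_iff,
      Set.mem_singleton_iff] at hx
    rcases hx with rfl | rfl | rfl | rfl
    · exact ⟨by linarith, e₁⟩
    · exact ⟨by linarith, e₂⟩
    · exact ⟨by linarith, e₃⟩
    · exact ⟨by linarith, e₄⟩
end
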